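/- arXiv:2512.11311 — 2 statements merged into one kernel-verified Lean document; each statement's English description precedes it below -/
import Mathlib

section
/- Let K be a real quadratic field of fundamental discriminant Δ₀, with fundamental unit ε₀ > 1 (under a fixed real embedding). For j ≥ 1 set O(Δ₀, j) = ℤ + ε₀ʲℤ. Then each O(Δ₀, j) is a unit-generated order of K, every unit-generated order of K equals O(Δ₀, j) for some j ≥ 1, and the orders O(Δ₀, j) for j ≥ 1 are pairwise distinct, with the single exception that when Δ₀ = 5 one has O(5, 1) = O(5, 2) = ℤ[(1+√5)/2]. -/
noncomputable section

/-- `x` is a unit of the subring `O` of `ℝ`. -/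
def IsUnitOf (O : Subring ℝ) (x : ℝ) : Prop := x ∈ O ∧ ∃ y ∈ O, x * y = 1

/-- `O` is an order of the subfield `K` of `ℝ`: a subring of the ring of integers of `K`
that is a free `ℤ`-module of rank 2 with fraction field `K`. -/
def IsOrderOf (K : Subfield ℝ) (O : Subring ℝ) : Prop :=
  (O : Set ℝ) ⊆ K ∧ (∀ x ∈ O, IsIntegral ℤ x) ∧
    Module.Free ℤ O ∧ Module.finrank ℤ O = 2 ∧
    ∀ x ∈ K, ∃ p ∈ O, ∃ q ∈ O, q ≠ 0 ∧ x = p / q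

/-- A subring `O` of `ℝ` is unit-generated if it is generated, as a `ℤ`-module
(equivalently, as an additive group), by its set of units. -/
def IsUnitGenerated (O : Subring ℝ) : Prop :=
  AddSubgroup.closure {x : ℝ | IsUnitOf O x} = O.toAddSubgroup

/-- `K` is a real quadratic field: `K = ℚ(√D)` for a positive nonsquare integer `D`. -/
def IsRealQuadratic (K : Subfield ℝ) : Prop :=
  ∃ D : ℤ, 0 < D ∧ ¬ IsSquare D ∧ K = Subfield.closure {Real.sqrt D}

/-- The ring of integers (maximal order) of a subfield `K` of `ℝ`: the elements of `K`
that are integral over `ℤ`. -/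
def ringOfIntegers (K : Subfield ℝ) : Subring ℝ :=
  (integralClosure ℤ ℝ).toSubring ⊓ K.toSubring

/-!
The units of an order `O` of `K` are, up to sign, the powers of a single `ε₀ ^ j`. As `ε₀ ^ (-j)` is
integral, it lies in `ℤ[ε₀ ^ j]`, so `O` is unit-generated if and only if it is `ℤ[ε₀ ^ j]`.

If `ℤ[u] = ℤ[v]` for units `1 < u < v`, then `v = a ± u` with `a ∈ ℤ`. Each of `u`, `v` is larger
than its conjugate, which excludes `v = a - u`. Comparing norms in `v = a + u` gives
`N v - N u = a * (a + tr u)` with `a, tr u ≥ 1` and left side at most `2`, so `a = tr u = 1` and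
`N u = -1`: thus `u = φ` and `v = φ ^ 2`, where `φ` is the golden ratio. No quadratic unit greater
than `1` is smaller than `φ`, so `ε₀ ^ j = φ` forces `j = 1`.
-/

open Polynomial IntermediateField
open scoped goldenRatio

lemma finrank_adjoin_sqrt {D : ℚ} (hD : 0 ≤ D) (hsq : ¬ IsSquare D) :
    Module.finrank ℚ ℚ⟮√(D : ℝ)⟯ = 2 := by
  have hroot : aeval √(D : ℝ) (X ^ 2 - C D) = 0 := by
    simp [Real.sq_sqrt (Rat.cast_nonneg.2 hD)]
  have hirr : Irreducible (X ^ 2 - C D) :=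
    X_pow_sub_C_irreducible_of_prime Nat.prime_two fun b hb ↦ hsq ⟨b, by rw [← hb, sq]⟩
  have hmonic : (X ^ 2 - C D).Monic := monic_X_pow_sub_C D two_ne_zero
  rw [adjoin.finrank ⟨_, hmonic, hroot⟩,
    ← minpoly.eq_of_irreducible_of_monic hirr hroot hmonic, natDegree_X_pow_sub_C]

lemma IsRealQuadratic.finrank_eq_two {K : Subfield ℝ} (hK : IsRealQuadratic K) :
    Module.finrank ℚ K = 2 := by
  obtain ⟨D, hD, hsq, rfl⟩ := hK
  have hclosure : ℚ⟮√((D : ℚ) : ℝ)⟯.toSubfield = Subfield.closure {√(D : ℝ)} := by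
    rw [adjoin_toSubfield]
    refine le_antisymm (Subfield.closure_le.2 ?_) (Subfield.closure_mono (by simp))
    rintro _ (⟨q, rfl⟩ | hx)
    · exact SubfieldClass.ratCast_mem _ q
    · simpa using Subfield.subset_closure hx
  rw [← hclosure]
  exact finrank_adjoin_sqrt (mod_cast hD.le) (by rwa [Rat.isSquare_intCast_iff])

lemma intCoeff_unique {x : ℝ} (hx : Irrational x) {a b c d : ℤ}
    (h : (a : ℝ) + b * x = c + d * x) : a = c ∧ b = d := by
  have hbd : b = d := by
    by_contra hne
    refine (hx.intCast_mul (sub_ne_zero.2 hne)).ne_int (c - a) ?_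
    push_cast
    linear_combination h
  subst hbd
  exact ⟨by exact_mod_cast add_right_cancel h, rfl⟩

section
variable {K : Subfield ℝ} (hK : Module.finrank ℚ K = 2) {x : ℝ} (hx : x ∈ K)
  (hirr : Irrational x)
include hK hx hirr

lemma exists_rat_coeffs {y : ℝ} (hy : y ∈ K) : ∃ a b : ℚ, y = a + b * x := by
  have hli : LinearIndependent ℚ ![(1 : K), ⟨x, hx⟩] := by
    refine (LinearIndependent.pair_iff' one_ne_zero).2 fun a ha ↦ hirr ⟨a, ?_⟩
    simpa [Rat.smul_def] using congrArg Subtype.val ha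
  have hspan := hli.span_eq_top_of_card_eq_finrank (by simp [hK])
  obtain ⟨a, b, hab⟩ : ∃ a b : ℚ, a • (1 : K) + b • ⟨x, hx⟩ = ⟨y, hy⟩ := by
    rw [← Submodule.mem_span_pair, ← Matrix.range_cons_cons_empty, hspan]
    trivial
  exact ⟨a, b, by simpa [Rat.smul_def] using (congrArg Subtype.val hab).symm⟩

lemma eq_closure_of_irrational : K = Subfield.closure {x} := by
  refine le_antisymm (fun y hy ↦ ?_) (Subfield.closure_le.2 (by simpa))
  obtain ⟨a, b, rfl⟩ := exists_rat_coeffs hK hx hirr hy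
  exact add_mem (SubfieldClass.ratCast_mem _ a)
    (mul_mem (SubfieldClass.ratCast_mem _ b) (Subfield.subset_closure rfl))

lemma natDegree_minpoly_int_eq_two (hint : IsIntegral ℤ x) : (minpoly ℤ x).natDegree = 2 := by
  have : FiniteDimensional ℚ K := .of_finrank_eq_succ hK
  have hdeg : (minpoly ℤ x).natDegree = (minpoly ℚ x).natDegree := by
    rw [minpoly.isIntegrallyClosed_eq_field_fractions' ℚ hint,
      (minpoly.monic hint).natDegree_map]
  have hle : (minpoly ℚ x).natDegree ≤ 2 := by
    rw [← hK, show x = algebraMap K ℝ ⟨x, hx⟩ from rfl,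
      minpoly.algebraMap_eq (algebraMap K ℝ).injective]
    exact minpoly.natDegree_le _
  have hge : 2 ≤ (minpoly ℚ x).natDegree := (minpoly.two_le_natDegree_iff hint.tower_top).2 hirr
  omega
end

/-- The ring `ℤ[η]` inside `ℝ`. For a quadratic integer `η` it equals `ℤ + ηℤ`, so `O(Δ₀, j)` is
`adjoinInt (ε₀ ^ j)`. -/
def adjoinInt (η : ℝ) : Subring ℝ := (Algebra.adjoin ℤ {η}).toSubring

lemma self_mem_adjoinInt (η : ℝ) : η ∈ adjoinInt η :=
  Algebra.self_mem_adjoin_singleton ℤ η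

lemma adjoinInt_le {η : ℝ} {O : Subring ℝ} : adjoinInt η ≤ O ↔ η ∈ O := by
  refine ⟨fun h ↦ h (self_mem_adjoinInt η), fun h ↦ ?_⟩
  have : Algebra.adjoin ℤ {η} ≤ subalgebraOfSubring O := Algebra.adjoin_singleton_le h
  exact this

section
variable {η : ℝ} (hdeg : (minpoly ℤ η).natDegree = 2)
include hdeg

lemma isIntegral_of_natDegree_minpoly : IsIntegral ℤ η :=
  minpoly.ne_zero_iff.1 fun h ↦ by simp [h] at hdeg

lemma coe_adjoinInt : (adjoinInt η : Set ℝ) = {x | ∃ a b : ℤ, x = a + b * η} := by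
  have hint := isIntegral_of_natDegree_minpoly hdeg
  ext x
  constructor
  · intro hx
    obtain ⟨f, hf, hxf⟩ := (Algebra.adjoin.powerBasis' hint).exists_eq_aeval ⟨x, hx⟩
    rw [Algebra.adjoin.powerBasis'_dim, hdeg] at hf
    obtain ⟨b, a, rfl⟩ := exists_eq_X_add_C_of_natDegree_le_one (Nat.le_of_lt_succ hf)
    refine ⟨a, b, ?_⟩
    simpa [Algebra.adjoin.powerBasis'_gen, add_comm] using congrArg Subtype.val hxf
  · rintro ⟨a, b, rfl⟩
    exact add_mem (intCast_mem _ a) (mul_mem (intCast_mem _ b) (self_mem_adjoinInt η))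

lemma free_adjoinInt : Module.Free ℤ (adjoinInt η) :=
  .of_basis (Algebra.adjoin.powerBasis' (isIntegral_of_natDegree_minpoly hdeg)).basis

lemma finrank_adjoinInt : Module.finrank ℤ (adjoinInt η) = 2 :=
  (Algebra.adjoin.powerBasis' (isIntegral_of_natDegree_minpoly hdeg)).finrank.trans hdeg

lemma exists_trace_norm : ∃ t n : ℤ, η ^ 2 = t * η - n := by
  have hlead : (minpoly ℤ η).coeff 2 = 1 := by
    rw [← hdeg]
    exact minpoly.monic (isIntegral_of_natDegree_minpoly hdeg)
  have hroot := minpoly.aeval ℤ η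
  simp only [aeval_eq_sum_range, hdeg, Finset.sum_range_succ, Finset.sum_range_zero, hlead,
    zsmul_eq_mul] at hroot
  refine ⟨-(minpoly ℤ η).coeff 1, (minpoly ℤ η).coeff 0, ?_⟩
  push_cast at hroot ⊢
  linear_combination hroot
end

lemma inv_mem_adjoin_of_isIntegral_inv {R F : Type*} [CommRing R] [Field F] [Algebra R F] {x : F}
    (hx : IsIntegral R x⁻¹) : x⁻¹ ∈ Algebra.adjoin R {x} := by
  obtain rfl | hx0 := eq_or_ne x 0
  · simp
  obtain ⟨p, hp, hroot⟩ := hx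
  let _ : Invertible x⁻¹ := invertibleOfNonzero (inv_ne_zero hx0)
  have hrev : aeval x p.reverse = 0 := by
    simpa [aeval_def] using (eval₂_reverse_eq_zero_iff (algebraMap R F) x⁻¹ p).2 hroot
  have hinv : x⁻¹ = -aeval x p.reverse.divX := by
    rw [← p.reverse.divX_mul_X_add, coeff_zero_reverse, hp.leadingCoeff] at hrev
    simp only [map_add, map_mul, aeval_X, map_one] at hrev
    refine inv_eq_of_mul_eq_one_right ?_
    linear_combination -hrev
  exact hinv ▸ neg_mem (aeval_mem_adjoin_singleton R x)

namespace IsUnitOf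

variable {O R : Subring ℝ} {x y : ℝ}

lemma ne_zero (hx : IsUnitOf O x) : x ≠ 0 := by
  obtain ⟨-, y, -, hxy⟩ := hx
  exact left_ne_zero_of_mul_eq_one hxy

lemma inv (hx : IsUnitOf O x) : IsUnitOf O x⁻¹ := by
  obtain ⟨hxO, y, hyO, hxy⟩ := hx
  obtain rfl := eq_inv_of_mul_eq_one_right hxy
  exact ⟨hyO, x, hxO, by rwa [mul_comm]⟩

lemma of_mem_inv_mem (hx0 : x ≠ 0) (hx : x ∈ O) (hx' : x⁻¹ ∈ O) : IsUnitOf O x :=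
  ⟨hx, x⁻¹, hx', mul_inv_cancel₀ hx0⟩

lemma mul (hx : IsUnitOf O x) (hy : IsUnitOf O y) : IsUnitOf O (x * y) :=
  of_mem_inv_mem (mul_ne_zero hx.ne_zero hy.ne_zero) (O.mul_mem hx.1 hy.1)
    (mul_inv x y ▸ O.mul_mem hx.inv.1 hy.inv.1)

lemma one : IsUnitOf O 1 := ⟨O.one_mem, 1, O.one_mem, one_mul 1⟩

lemma pow (hx : IsUnitOf O x) (n : ℕ) : IsUnitOf O (x ^ n) := by
  induction n with
  | zero => exact pow_zero x ▸ one
  | succ n ih => exact pow_succ x n ▸ ih.mul hx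

lemma zpow (hx : IsUnitOf O x) : ∀ m : ℤ, IsUnitOf O (x ^ m)
  | .ofNat n => by simpa using hx.pow n
  | .negSucc n => by simpa using (hx.pow (n + 1)).inv

lemma abs (hx : IsUnitOf O x) : IsUnitOf O |x| := by
  obtain h | h := abs_choice x
  · rwa [h]
  · exact h ▸ of_mem_inv_mem (neg_ne_zero.2 hx.ne_zero) (O.neg_mem hx.1)
      (inv_neg (a := x) ▸ O.neg_mem hx.inv.1)

lemma mono (hOR : O ≤ R) (hx : IsUnitOf O x) : IsUnitOf R x :=
  of_mem_inv_mem hx.ne_zero (hOR hx.1) (hOR hx.inv.1)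

end IsUnitOf

/-- `ε` is the fundamental unit of the subring `R` of `ℝ`: its smallest unit greater than `1`. -/
def IsFundamentalUnit (R : Subring ℝ) (ε : ℝ) : Prop :=
  IsLeast {u | IsUnitOf R u ∧ 1 < u} ε

namespace IsFundamentalUnit

variable {R O : Subring ℝ} {ε : ℝ} (hε : IsFundamentalUnit R ε)
include hε

lemma exists_abs_eq_zpow {u : ℝ} (hu : IsUnitOf R u) : ∃ m : ℤ, |u| = ε ^ m := by
  obtain ⟨⟨hεR, hε1⟩, hmin⟩ := hε
  have hε0 : 0 < ε := one_pos.trans hε1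
  obtain ⟨m, hle, hlt⟩ := exists_mem_Ico_zpow (abs_pos.2 hu.ne_zero) hε1
  refine ⟨m, hle.antisymm' <| not_lt.1 fun h ↦ hlt.not_ge ?_⟩
  have hquot : ε ≤ |u| * (ε ^ m)⁻¹ :=
    hmin ⟨hu.abs.mul (hεR.zpow m).inv, by rwa [← div_eq_mul_inv, one_lt_div (by positivity)]⟩
  rwa [← div_eq_mul_inv, le_div_iff₀ (by positivity), mul_comm, ← zpow_add_one₀ hε0.ne'] at hquot

lemma exists_pow_generating_units (hO : O ≤ R) : ∃ j : ℕ, IsUnitOf O (ε ^ j) ∧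
    ∀ u, IsUnitOf O u → ∃ m : ℤ, |u| = (ε ^ j) ^ m := by
  have hε0 : ε ≠ 0 := hε.1.1.ne_zero
  let exponents : AddSubgroup ℤ :=
    { carrier := {m | IsUnitOf O (ε ^ m)}
      add_mem' := fun ha hb ↦ by simpa only [Set.mem_ofPred_eq, zpow_add₀ hε0] using ha.mul hb
      zero_mem' := by simpa using IsUnitOf.one
      neg_mem' := fun ha ↦ by simpa only [Set.mem_ofPred_eq, zpow_neg] using ha.inv }
  obtain ⟨g, hg⟩ := Int.subgroup_cyclic exponents
  rw [← AddSubgroup.zmultiples_eq_closure, ← Int.zmultiples_natAbs] at hg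
  have hgen : (g.natAbs : ℤ) ∈ exponents := hg ▸ AddSubgroup.mem_zmultiples _
  refine ⟨g.natAbs, by rwa [← zpow_natCast], fun u hu ↦ ?_⟩
  obtain ⟨m, hm⟩ := hε.exists_abs_eq_zpow (hu.mono hO)
  have hmem : m ∈ exponents := show IsUnitOf O (ε ^ m) from hm ▸ hu.abs
  rw [hg] at hmem
  obtain ⟨z, rfl⟩ := AddSubgroup.mem_zmultiples_iff.1 hmem
  exact ⟨z, by rw [hm, smul_eq_mul, mul_comm, zpow_mul, zpow_natCast]⟩

end IsFundamentalUnit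

lemma irrational_of_natDegree_minpoly {x : ℝ} (hdeg : (minpoly ℤ x).natDegree = 2) :
    Irrational x := by
  have hint := isIntegral_of_natDegree_minpoly hdeg
  rintro ⟨q, hq⟩
  obtain ⟨k, hk⟩ := hint.exists_int_iff_exists_rat.1 ⟨q, hq.symm⟩
  exact (minpoly.two_le_natDegree_iff hint).1 hdeg.ge ⟨k, hk.symm⟩

lemma irrational_of_isIntegral_inv {x : ℝ} (hx : IsIntegral ℤ x) (hx' : IsIntegral ℤ x⁻¹)
    (hx1 : 1 < x) : Irrational x := by
  rintro ⟨q, rfl⟩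
  obtain ⟨k, hk⟩ := hx.exists_int_iff_exists_rat.1 ⟨q, rfl⟩
  obtain ⟨l, hl⟩ := hx'.exists_int_iff_exists_rat.1 ⟨q⁻¹, by simp⟩
  have hkl : k * l = 1 := by
    rw [← @Int.cast_inj ℝ]
    push_cast
    rw [← hk, ← hl, mul_inv_cancel₀ (by positivity)]
  have hk1 : 1 < k := by rw [hk] at hx1; exact_mod_cast hx1
  obtain rfl | rfl := Int.eq_one_or_neg_one_of_mul_eq_one hkl <;> omega

lemma isUnitOf_adjoinInt {u : ℝ} (hu0 : u ≠ 0) (hu : IsIntegral ℤ u⁻¹) :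
    IsUnitOf (adjoinInt u) u :=
  .of_mem_inv_mem hu0 (self_mem_adjoinInt u) (inv_mem_adjoin_of_isIntegral_inv hu)

lemma IsFundamentalUnit.isUnitOf_adjoinInt_pow {K : Subfield ℝ} {ε : ℝ}
    (hε : IsFundamentalUnit (ringOfIntegers K) ε) (j : ℕ) :
    IsUnitOf (adjoinInt (ε ^ j)) (ε ^ j) :=
  isUnitOf_adjoinInt (hε.1.1.pow j).ne_zero (hε.1.1.pow j).inv.1.1

lemma isUnitGenerated_adjoinInt {η : ℝ} (hη : IsUnitOf (adjoinInt η) η) :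
    IsUnitGenerated (adjoinInt η) := by
  refine le_antisymm ((AddSubgroup.closure_le _).2 fun x hx ↦ hx.1) fun x hx ↦ ?_
  obtain ⟨p, rfl⟩ : x ∈ (aeval η : ℤ[X] →ₐ[ℤ] ℝ).range := by
    rwa [← Algebra.adjoin_singleton_eq_range_aeval]
  simp only [AlgHom.toRingHom_eq_coe, RingHom.coe_coe, aeval_eq_sum_range]
  have hpow (i : ℕ) : η ^ i ∈ AddSubgroup.closure {u | IsUnitOf (adjoinInt η) u} :=
    AddSubgroup.subset_closure (hη.pow i)
  exact sum_mem fun i _ ↦ zsmul_mem (hpow i) _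

lemma isOrderOf_adjoinInt {K : Subfield ℝ} (hK : Module.finrank ℚ K = 2) {η : ℝ} (hη : η ∈ K)
    (hdeg : (minpoly ℤ η).natDegree = 2) : IsOrderOf K (adjoinInt η) := by
  have hint := isIntegral_of_natDegree_minpoly hdeg
  have hle : adjoinInt η ≤ ringOfIntegers K := adjoinInt_le.2 ⟨hint, hη⟩
  refine ⟨fun x hx ↦ (hle hx).2, fun x hx ↦ (hle hx).1, free_adjoinInt hdeg,
    finrank_adjoinInt hdeg, fun x hx ↦ ?_⟩
  obtain ⟨a, b, rfl⟩ := exists_rat_coeffs hK hη (irrational_of_natDegree_minpoly hdeg) hx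
  have ha : (a.den : ℝ) ≠ 0 := mod_cast a.den_nz
  have hb : (b.den : ℝ) ≠ 0 := mod_cast b.den_nz
  refine ⟨a.num * b.den + b.num * a.den * η, ?_, a.den * b.den, ?_, mul_ne_zero ha hb, ?_⟩
  · rw [← SetLike.mem_coe, coe_adjoinInt hdeg]
    exact ⟨a.num * b.den, b.num * a.den, by push_cast; rfl⟩
  · exact mul_mem (natCast_mem _ _) (natCast_mem _ _)
  · rw [Rat.cast_def a, Rat.cast_def b]
    field_simp

lemma IsOrderOf.not_le_range_intCast {K : Subfield ℝ} {O : Subring ℝ} (hO : IsOrderOf K O) {x : ℝ}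
    (hx : x ∈ K) (hirr : Irrational x) : ¬ O ≤ (Int.castRingHom ℝ).range := by
  intro hle
  obtain ⟨p, hp, q, hq, -, rfl⟩ := hO.2.2.2.2 x hx
  obtain ⟨⟨a, rfl⟩, b, rfl⟩ := And.intro (hle hp) (hle hq)
  exact hirr ⟨a / b, by simp⟩

lemma IsUnitGenerated.eq_adjoinInt {O : Subring ℝ} (hO : IsUnitGenerated O) {η : ℝ}
    (hηO : IsUnitOf O η) (hη : IsUnitOf (adjoinInt η) η)
    (hgen : ∀ u, IsUnitOf O u → ∃ m : ℤ, |u| = η ^ m) : O = adjoinInt η := by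
  refine le_antisymm ?_ (adjoinInt_le.2 hηO.1)
  have hclosure : AddSubgroup.closure {u | IsUnitOf O u} ≤ (adjoinInt η).toAddSubgroup := by
    refine (AddSubgroup.closure_le _).2 fun u hu ↦ ?_
    obtain ⟨m, hm⟩ := hgen u hu
    exact abs_mem_iff.1 (hm ▸ (hη.zpow m).1)
  rwa [hO] at hclosure

lemma IsUnitGenerated.exists_eq_adjoinInt_pow {K : Subfield ℝ} {O : Subring ℝ} {ε : ℝ}
    (hU : IsUnitGenerated O) (hO : IsOrderOf K O) (hε : IsFundamentalUnit (ringOfIntegers K) ε) :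
    ∃ j : ℕ, 1 ≤ j ∧ O = adjoinInt (ε ^ j) := by
  obtain ⟨j, hj, hgen⟩ :=
    hε.exists_pow_generating_units fun x hx ↦ ⟨hO.2.1 x hx, hO.1 hx⟩
  have hOj := hU.eq_adjoinInt hj (hε.isUnitOf_adjoinInt_pow j) hgen
  refine ⟨j, Nat.one_le_iff_ne_zero.2 ?_, hOj⟩
  rintro rfl
  refine hO.not_le_range_intCast hε.1.1.1.2
    (irrational_of_isIntegral_inv hε.1.1.1.1 hε.1.1.inv.1.1 hε.1.2) ?_
  rw [hOj, pow_zero, adjoinInt_le]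
  exact one_mem _

section
variable {u v : ℝ} (hdeg : (minpoly ℤ u).natDegree = 2) (hu : IsUnitOf (adjoinInt u) u)
  (hu1 : 1 < u)

include hdeg hu in
lemma exists_trace_norm_of_unit : ∃ t n : ℤ, u ^ 2 = t * u - n ∧ (n = 1 ∨ n = -1) := by
  obtain ⟨t, n, hsq⟩ := exists_trace_norm hdeg
  obtain ⟨a, b, hab⟩ : ∃ a b : ℤ, u⁻¹ = a + b * u := (coe_adjoinInt hdeg).subset hu.inv.1
  have hmul : a * u + b * u ^ 2 = 1 := by
    rw [← mul_inv_cancel₀ hu.ne_zero, hab]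
    ring
  have hcoeff := intCoeff_unique (irrational_of_natDegree_minpoly hdeg)
    (a := -(n * b)) (b := a + b * t) (c := 1) (d := 0)
    (by push_cast; linear_combination hmul - b * hsq)
  exact ⟨t, n, hsq, Int.eq_one_or_neg_one_of_mul_eq_one (u := n) (v := -b) (by linarith [hcoeff.1])⟩

include hdeg hu hu1

lemma exists_trace_norm_of_one_lt : ∃ t n : ℤ, u ^ 2 = t * u - n ∧ (t : ℝ) < 2 * u ∧
    (n = 1 ∧ 3 ≤ t ∨ n = -1 ∧ 1 ≤ t) := by
  obtain ⟨t, n, hsq, rfl | rfl⟩ := exists_trace_norm_of_unit hdeg hu <;> push_cast at hsq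
  · have ht : (2 : ℝ) < t := by nlinarith
    exact ⟨t, 1, by simpa using hsq, by nlinarith, .inl ⟨rfl, by exact_mod_cast ht⟩⟩
  · have ht : (0 : ℝ) < t := by nlinarith
    exact ⟨t, -1, by simpa using hsq, by nlinarith, .inr ⟨rfl, by exact_mod_cast ht⟩⟩

lemma goldenRatio_le_of_unit : φ ≤ u := by
  obtain ⟨t, n, hsq, -, htn⟩ := exists_trace_norm_of_one_lt hdeg hu hu1
  have hle : u + 1 ≤ u ^ 2 := by
    obtain ⟨rfl, ht⟩ | ⟨rfl, ht⟩ := htn <;> push_cast at hsq <;> rify at ht <;> nlinarith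
  nlinarith [Real.goldenRatio_sq, Real.one_lt_goldenRatio]
end

lemma exists_intCast_add_or_sub_of_adjoinInt_eq {u v : ℝ} (hu : (minpoly ℤ u).natDegree = 2)
    (hv : (minpoly ℤ v).natDegree = 2) (h : adjoinInt u = adjoinInt v) :
    ∃ a : ℤ, v = a + u ∨ v = a - u := by
  obtain ⟨a, b, hab⟩ : ∃ a b : ℤ, v = a + b * u :=
    (coe_adjoinInt hu).subset (h ▸ self_mem_adjoinInt v)
  obtain ⟨c, d, hcd⟩ : ∃ c d : ℤ, u = c + d * v :=
    (coe_adjoinInt hv).subset (h ▸ self_mem_adjoinInt u)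
  have hbd : b * d = 1 :=
    (intCoeff_unique (irrational_of_natDegree_minpoly hu) (a := c + d * a) (c := 0)
      (by push_cast; linear_combination -hcd - d * hab)).2
  refine ⟨a, ?_⟩
  obtain rfl | rfl := Int.eq_one_or_neg_one_of_mul_eq_one hbd
  · exact .inl (by simpa using hab)
  · exact .inr (by simpa [sub_eq_add_neg] using hab)

lemma eq_goldenRatio_of_sq_eq {x : ℝ} (hx : 0 < x) (hsq : x ^ 2 = x + 1) : x = φ := by
  nlinarith [Real.goldenRatio_sq, Real.one_lt_goldenRatio]

lemma eq_goldenRatio_of_adjoinInt_eq {u v : ℝ} (hdegu : (minpoly ℤ u).natDegree = 2)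
    (hdegv : (minpoly ℤ v).natDegree = 2) (hu : IsUnitOf (adjoinInt u) u)
    (hv : IsUnitOf (adjoinInt v) v) (hu1 : 1 < u) (huv : u < v)
    (h : adjoinInt u = adjoinInt v) : u = φ ∧ v = φ ^ 2 := by
  have hirr := irrational_of_natDegree_minpoly hdegu
  obtain ⟨t, n, husq, htu, htn⟩ := exists_trace_norm_of_one_lt hdegu hu hu1
  obtain ⟨T, N, hvsq, hTv, hTN⟩ := exists_trace_norm_of_one_lt hdegv hv (hu1.trans huv)
  obtain ⟨a, rfl | rfl⟩ := exists_intCast_add_or_sub_of_adjoinInt_eq hdegu hdegv h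
  · have ha : 0 < a := by exact_mod_cast pos_of_lt_add_left huv
    obtain ⟨hconst, hlin⟩ := intCoeff_unique hirr (a := a ^ 2 - n) (b := t + 2 * a)
      (c := T * a - N) (d := T) (by push_cast; linear_combination hvsq - husq)
    have hnorm : N - n = a * (t + a) := by linear_combination hconst - a * hlin
    obtain ⟨rfl, rfl, rfl⟩ : a = 1 ∧ t = 1 ∧ n = -1 := by
      obtain ⟨rfl, ht⟩ | ⟨rfl, ht⟩ := htn
      · have : N - 1 ≤ 0 := by omega
        nlinarith
      · have : N + 1 ≤ 2 := by omega
        refine ⟨by nlinarith, by nlinarith, rfl⟩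
    push_cast at husq ⊢
    obtain rfl := eq_goldenRatio_of_sq_eq (one_pos.trans hu1) (by linarith)
    exact ⟨rfl, by linarith⟩
  · have htrace : t - 2 * a = -T := (intCoeff_unique hirr (a := a ^ 2 - n) (c := T * a - N)
      (by push_cast; linear_combination hvsq - husq)).2
    rify at htrace
    linarith

lemma natDegree_minpoly_of_isUnitOf {K : Subfield ℝ} (hK : Module.finrank ℚ K = 2) {u : ℝ}
    (hu : IsUnitOf (ringOfIntegers K) u) (hu1 : 1 < u) : (minpoly ℤ u).natDegree = 2 :=
  natDegree_minpoly_int_eq_two hK hu.1.2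
    (irrational_of_isIntegral_inv hu.1.1 hu.inv.1.1 hu1) hu.1.1

lemma isUnitOf_ringOfIntegers_goldenRatio {K : Subfield ℝ} (hφ : φ ∈ K) :
    IsUnitOf (ringOfIntegers K) φ := by
  have hint : IsIntegral ℤ φ :=
    ⟨X ^ 2 - X - 1, by monicity!, by simp [Real.goldenRatio_sq]⟩
  have hmem : φ ∈ ringOfIntegers K := ⟨hint, hφ⟩
  exact ⟨hmem, φ - 1, sub_mem hmem (one_mem _), by linear_combination Real.goldenRatio_sq⟩

lemma adjoinInt_goldenRatio_sq : adjoinInt (φ ^ 2) = adjoinInt φ := by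
  refine le_antisymm (adjoinInt_le.2 (pow_mem (self_mem_adjoinInt φ) 2)) (adjoinInt_le.2 ?_)
  have hmem : φ ^ 2 - 1 ∈ adjoinInt (φ ^ 2) := sub_mem (self_mem_adjoinInt _) (one_mem _)
  rwa [sub_eq_of_eq_add Real.goldenRatio_sq] at hmem

section
variable {K : Subfield ℝ} (hK : Module.finrank ℚ K = 2)
include hK

lemma goldenRatio_mem_iff : φ ∈ K ↔ K = Subfield.closure {√5} := by
  refine ⟨fun hφ ↦ eq_closure_of_irrational hK ?_ ?_, ?_⟩
  · rw [show √5 = 2 * φ - 1 by unfold Real.goldenRatio; ring]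
    exact sub_mem (mul_mem (ofNat_mem K 2) hφ) (one_mem K)
  · simpa using Nat.prime_five.irrational_sqrt
  · rintro rfl
    exact div_mem (add_mem (one_mem _) (Subfield.subset_closure rfl)) (ofNat_mem _ 2)

variable {ε : ℝ} (hε : IsFundamentalUnit (ringOfIntegers K) ε)
include hε

namespace IsFundamentalUnit

lemma goldenRatio_le : φ ≤ ε :=
  goldenRatio_le_of_unit (natDegree_minpoly_of_isUnitOf hK hε.1.1 hε.1.2)
    (isUnitOf_adjoinInt hε.1.1.ne_zero hε.1.1.inv.1.1) hε.1.2

lemma eq_goldenRatio (hφ : φ ∈ K) : ε = φ :=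
  (hε.2 ⟨isUnitOf_ringOfIntegers_goldenRatio hφ, Real.one_lt_goldenRatio⟩).antisymm
    (hε.goldenRatio_le hK)

lemma natDegree_minpoly_pow {j : ℕ} (hj : 1 ≤ j) : (minpoly ℤ (ε ^ j)).natDegree = 2 :=
  natDegree_minpoly_of_isUnitOf hK (hε.1.1.pow j) (one_lt_pow₀ hε.1.2 (by omega))

lemma eq_goldenRatio_of_adjoinInt_pow_eq {j k : ℕ} (hj : 1 ≤ j) (hjk : j < k)
    (h : adjoinInt (ε ^ j) = adjoinInt (ε ^ k)) : ε = φ ∧ j = 1 ∧ k = 2 := by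
  obtain ⟨hjφ, hkφ⟩ := eq_goldenRatio_of_adjoinInt_eq (hε.natDegree_minpoly_pow hK hj)
    (hε.natDegree_minpoly_pow hK (hj.trans hjk.le)) (hε.isUnitOf_adjoinInt_pow j)
    (hε.isUnitOf_adjoinInt_pow k) (one_lt_pow₀ hε.1.2 (by omega))
    (pow_lt_pow_right₀ hε.1.2 hjk) h
  have hj1 : j = 1 := by
    refine hj.antisymm' ((pow_le_pow_iff_right₀ hε.1.2).1 ?_)
    rw [hjφ, pow_one]
    exact hε.goldenRatio_le hK
  subst hj1
  rw [pow_one] at hjφ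
  subst hjφ
  exact ⟨rfl, rfl, pow_right_injective₀ (one_pos.trans hε.1.2) hε.1.2.ne' hkφ⟩

end IsFundamentalUnit
end

/-- Let `K` be a real quadratic field with fundamental unit `ε₀ > 1` (the smallest unit of
the ring of integers exceeding 1), and set `O(Δ₀, j) = ℤ + ε₀ʲℤ` for `j ≥ 1`. Then each
`O(Δ₀, j)` is a unit-generated order of `K`; every unit-generated order of `K` is of this
form; and the `O(Δ₀, j)` are pairwise distinct, with the single exception that when
`Δ₀ = 5` (i.e. `K = ℚ(√5)`) one has `O(5,1) = O(5,2) = ℤ[(1+√5)/2]`. -/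
theorem unitGenerated_orders_parametrization (K : Subfield ℝ) (hK : IsRealQuadratic K)
    (ε₀ : ℝ) (hmem : ε₀ ∈ K) (hint : IsIntegral ℤ ε₀) (hinv : IsIntegral ℤ ε₀⁻¹)
    (hpos : 1 < ε₀)
    (hfund : ∀ u : ℝ, u ∈ K → IsIntegral ℤ u → IsIntegral ℤ u⁻¹ → 1 < u → ε₀ ≤ u) :
    (∀ j : ℕ, 1 ≤ j → ∃ O : Subring ℝ,
        (O : Set ℝ) = {x : ℝ | ∃ a b : ℤ, x = (a : ℝ) + (b : ℝ) * ε₀ ^ j} ∧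
        IsOrderOf K O ∧ IsUnitGenerated O) ∧
    (∀ O : Subring ℝ, IsOrderOf K O → IsUnitGenerated O →
        ∃ j : ℕ, 1 ≤ j ∧
          (O : Set ℝ) = {x : ℝ | ∃ a b : ℤ, x = (a : ℝ) + (b : ℝ) * ε₀ ^ j}) ∧
    (∀ j k : ℕ, 1 ≤ j → 1 ≤ k → j ≠ k →
        {x : ℝ | ∃ a b : ℤ, x = (a : ℝ) + (b : ℝ) * ε₀ ^ j} =
          {x : ℝ | ∃ a b : ℤ, x = (a : ℝ) + (b : ℝ) * ε₀ ^ k} →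
        K = Subfield.closure {Real.sqrt 5} ∧
          ((j = 1 ∧ k = 2) ∨ (j = 2 ∧ k = 1))) ∧
    (K = Subfield.closure {Real.sqrt 5} →
        ε₀ = (1 + Real.sqrt 5) / 2 ∧
        {x : ℝ | ∃ a b : ℤ, x = (a : ℝ) + (b : ℝ) * ε₀ ^ 1} =
          {x : ℝ | ∃ a b : ℤ, x = (a : ℝ) + (b : ℝ) * ε₀ ^ 2}) := by
  have hrank := hK.finrank_eq_two
  have hε : IsFundamentalUnit (ringOfIntegers K) ε₀ :=
    ⟨⟨.of_mem_inv_mem (by positivity) ⟨hint, hmem⟩ ⟨hinv, K.inv_mem hmem⟩, hpos⟩,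
      fun u hu ↦ hfund u hu.1.1.2 hu.1.1.1 hu.1.inv.1.1 hu.2⟩
  have hcoe {j : ℕ} (hj : 1 ≤ j) := coe_adjoinInt (hε.natDegree_minpoly_pow hrank hj)
  refine ⟨fun j hj ↦ ⟨adjoinInt (ε₀ ^ j), hcoe hj, ?_, ?_⟩, fun O hO hU ↦ ?_,
    fun j k hj hk hjk h ↦ ?_, fun hK5 ↦ ?_⟩
  · exact isOrderOf_adjoinInt hrank (pow_mem hmem j) (hε.natDegree_minpoly_pow hrank hj)
  · exact isUnitGenerated_adjoinInt (hε.isUnitOf_adjoinInt_pow j)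
  · obtain ⟨j, hj, rfl⟩ := hU.exists_eq_adjoinInt_pow hO hε
    exact ⟨j, hj, hcoe hj⟩
  · rw [← hcoe hj, ← hcoe hk, SetLike.coe_set_eq] at h
    rw [← goldenRatio_mem_iff hrank]
    obtain hlt | hlt := hjk.lt_or_gt
    · obtain ⟨rfl, hjk'⟩ := hε.eq_goldenRatio_of_adjoinInt_pow_eq hrank hj hlt h
      exact ⟨hmem, .inl hjk'⟩
    · obtain ⟨rfl, hkj⟩ := hε.eq_goldenRatio_of_adjoinInt_pow_eq hrank hk hlt h.symm
      exact ⟨hmem, .inr hkj.symm⟩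
  · have hφ := hε.eq_goldenRatio hrank ((goldenRatio_mem_iff hrank).2 hK5)
    rw [← hcoe le_rfl, ← hcoe one_le_two, hφ, pow_one, adjoinInt_goldenRatio_sq]
    exact ⟨rfl, rfl⟩
end
end

section
/- Let Δ = n² − 4 for an integer n ≥ 0 with Δ a nonsquare. (1) If n is even, O_Δ is a maximal order (Δ is a fundamental discriminant), and the class number h_Δ = 1, then n ∈ {0, 4} (so Δ ∈ {−4, 12}). (2) If n ≡ 2 (mod 4) and n > 6, then the class number h_Δ is even, regardless of whether O_Δ is maximal; while for n = 6 (so Δ = 32), the class number is h_{32} = 1. -/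
noncomputable section

/-- A complex square root of an integer `d`. -/
def sqrtD (d : ℤ) : ℂ :=
  if 0 ≤ d then ((Real.sqrt d : ℝ) : ℂ) else Complex.I * ((Real.sqrt (-d) : ℝ) : ℂ)

/-- The element `(Δ + √Δ)/2` generating the quadratic order of discriminant `Δ`. -/
def omegaD (d : ℤ) : ℂ := ((d : ℂ) + sqrtD d) / 2

/-- The quadratic order `O_Δ = ℤ[(Δ + √Δ)/2]` of discriminant `Δ`, as a subring of `ℂ`. -/
def QOrder (d : ℤ) : Subring ℂ := Subring.closure {omegaD d}

/-- The class number `h_Δ`: the order of the (wide) class group of `O_Δ`,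
the group of invertible fractional ideals modulo principal fractional ideals. -/
def classNumber (d : ℤ) : ℕ := Nat.card (ClassGroup (QOrder d))

/-- `O_Δ` is a maximal order: every element of `ℚ(√Δ)` (the subfield of `ℂ` generated by
`(Δ+√Δ)/2`) that is integral over `ℤ` already lies in `O_Δ`. -/
def IsMaximalOrder (d : ℤ) : Prop :=
  ∀ x ∈ Subfield.closure {omegaD d}, IsIntegral ℤ x → x ∈ QOrder d

/-!
For even `n = 2m` we have `Δ = 4 (m² - 1)` and `O_Δ ≅ ℤ[√(m² - 1)]`, with the small unit
`m + √(m² - 1)`. Multiplying by this unit or its inverse shrinks the `√`-coordinate of any element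
of norm less than `2m - 2` in absolute value, so every such element is an associate of a rational
integer. Hence an ideal `(q, s + √(m² - 1))` with square `(q)` and `1 < q < 2m - 2` is not
principal; such a `q` exists for all `m ≥ 4`, which yields a class of order two.

For `Δ = 32` division with remainder in `ℤ[√8]` fails only at quotients congruent to `√8 / 2`. An
ideal is therefore either principal or of the form `b ℤ[√2]`, and the latter is not invertible.
-/

open scoped nonZeroDivisors

section Invertible

variable {R : Type*} [CommRing R]

theorem le_of_mul_le_mul_left_of_isUnit {I J K : Ideal R}
    (hI : IsUnit (I : FractionalIdeal R⁰ (FractionRing R))) (h : I * J ≤ I * K) : J ≤ K := by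
  obtain ⟨U, hU⟩ := hI
  rw [← FractionalIdeal.coeIdeal_le_coeIdeal (FractionRing R), FractionalIdeal.coeIdeal_mul,
    FractionalIdeal.coeIdeal_mul, ← hU] at h
  simpa using mul_le_mul_right h (↑U⁻¹ : FractionalIdeal R⁰ (FractionRing R))

variable [IsDomain R]

theorem isUnit_coeIdeal_of_mul_self_eq_span {I : Ideal R} {q : R} (hq : q ≠ 0)
    (h : I * I = Ideal.span {q}) : IsUnit (I : FractionalIdeal R⁰ (FractionRing R)) := by
  rw [← isUnit_mul_self_iff, ← FractionalIdeal.coeIdeal_mul, h,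
    FractionalIdeal.coeIdeal_span_singleton]
  exact .of_mul_eq_one _ (FractionalIdeal.spanSingleton_mul_inv _ (by simpa using hq))

theorem even_card_classGroup_of_mul_self_eq_span {I : Ideal R} {q : R} (hq : q ≠ 0)
    (h : I * I = Ideal.span {q}) (hI : ¬ I.IsPrincipal) : Even (Nat.card (ClassGroup R)) := by
  obtain ⟨U, hU⟩ := isUnit_coeIdeal_of_mul_self_eq_span hq h
  have hne : ClassGroup.mk (FractionRing R) U ≠ 1 := fun hU1 ↦ by
    obtain ⟨x, -, hx⟩ := (ClassGroup.mk_eq_one_of_coe_ideal hU).1 hU1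
    exact hI ⟨x, hx⟩
  have hsq : ClassGroup.mk (FractionRing R) U ^ 2 = 1 := by
    rw [← map_pow]
    refine (ClassGroup.mk_eq_one_of_coe_ideal (I' := I * I) ?_).2 ⟨q, hq, h⟩
    rw [Units.val_pow_eq_pow_val, hU, sq, FractionalIdeal.coeIdeal_mul]
  rw [even_iff_two_dvd, ← orderOf_eq_prime hsq hne]
  exact orderOf_dvd_natCard _

theorem subsingleton_classGroup_of_isPrincipal_of_isUnit
    (h : ∀ I : Ideal R, IsUnit (I : FractionalIdeal R⁰ (FractionRing R)) → I.IsPrincipal) :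
    Subsingleton (ClassGroup R) := by
  refine subsingleton_of_forall_eq 1 (ClassGroup.induction (FractionRing R) fun I ↦ ?_)
  rw [ClassGroup.mk_eq_one_iff]
  exact FractionalIdeal.isPrincipal_of_isPrincipal_num _
    (h _ (FractionalIdeal.isUnit_num.2 I.isUnit))

end Invertible

section Embedding

variable {d : ℤ}

theorem sqrtD_mul_self (d : ℤ) : sqrtD d * sqrtD d = d := by
  unfold sqrtD
  split_ifs with hd
  · rw [← Complex.ofReal_mul, Real.mul_self_sqrt (by exact_mod_cast hd), Complex.ofReal_intCast]
  · have hd' : (0 : ℝ) ≤ -d := by exact_mod_cast (by omega : 0 ≤ -d)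
    rw [mul_mul_mul_comm, ← Complex.ofReal_mul, Real.mul_self_sqrt hd', Complex.I_mul_I]
    push_cast
    ring

/-- The embedding of `ℤ[√d]` in `ℂ` sending `√d` to `√(4d) / 2`, so that its image is the quadratic
order of discriminant `4d`. -/
def zsqrtdToComplex (d : ℤ) : ℤ√d →+* ℂ :=
  Zsqrtd.lift ⟨sqrtD (4 * d) / 2, by
    have h := sqrtD_mul_self (4 * d)
    push_cast at h
    linear_combination h / 4⟩

theorem zsqrtdToComplex_apply (z : ℤ√d) :
    zsqrtdToComplex d z = z.re + z.im * (sqrtD (4 * d) / 2) := rfl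

theorem omegaD_four_mul (d : ℤ) : omegaD (4 * d) = zsqrtdToComplex d ⟨2 * d, 1⟩ := by
  rw [omegaD, zsqrtdToComplex_apply]
  push_cast
  ring

theorem QOrder_four_mul (d : ℤ) : QOrder (4 * d) = (zsqrtdToComplex d).range := by
  apply le_antisymm
  · rw [QOrder, Subring.closure_le, Set.singleton_subset_iff, omegaD_four_mul]
    exact ⟨_, rfl⟩
  · rintro _ ⟨z, rfl⟩
    have hz : z = ((z.re - z.im * (2 * d) : ℤ) : ℤ√d) + (z.im : ℤ√d) * ⟨2 * d, 1⟩ := by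
      ext <;> simp
    rw [hz, map_add, map_mul, map_intCast, map_intCast, ← omegaD_four_mul]
    exact add_mem (intCast_mem _ _) (mul_mem (intCast_mem _ _) (Subring.subset_closure rfl))

variable [hd : Fact (¬ IsSquare d)]

theorem zsqrtdToComplex_injective : Function.Injective (zsqrtdToComplex d) :=
  Zsqrtd.lift_injective _ fun n hn ↦ hd.out ⟨n, hn⟩

instance isDomain_zsqrtd : IsDomain (ℤ√d) :=
  zsqrtdToComplex_injective.isDomain _

theorem classNumber_four_mul : classNumber (4 * d) = Nat.card (ClassGroup (ℤ√d)) := by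
  have e : ℤ√d ≃+* QOrder (4 * d) :=
    (RingEquiv.ofLeftInverse (Function.leftInverse_invFun zsqrtdToComplex_injective)).trans
      (RingEquiv.subringCongr (QOrder_four_mul d).symm)
  exact (Nat.card_congr (ClassGroup.mulEquiv e).toEquiv).symm

/-- `√d / 2` is an integral element outside the order. -/
theorem not_isMaximalOrder_four_mul (h4 : 4 ∣ d) : ¬ IsMaximalOrder (4 * d) := by
  intro hmax
  obtain ⟨k, hk⟩ := h4
  set r : ℂ := zsqrtdToComplex d Zsqrtd.sqrtd with hr
  have hrr : r * r = 4 * k := by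
    rw [hr, ← map_mul, Zsqrtd.dmuld, map_intCast, hk]
    push_cast
    ring
  have hfield : r / 2 ∈ Subfield.closure {omegaD (4 * d)} := by
    have hω : r = omegaD (4 * d) - (2 * d : ℤ) := by
      rw [omegaD_four_mul, hr, zsqrtdToComplex_apply, zsqrtdToComplex_apply]
      simp
    rw [hω]
    exact div_mem (sub_mem (Subfield.subset_closure rfl) (intCast_mem _ _)) (ofNat_mem _ 2)
  have hint : IsIntegral ℤ (r / 2) := .of_pow two_pos <| by
    rw [show (r / 2) ^ 2 = algebraMap ℤ ℂ k by rw [eq_intCast]; linear_combination hrr / 4]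
    exact isIntegral_algebraMap
  have hmem := hmax _ hfield hint
  rw [QOrder_four_mul] at hmem
  obtain ⟨z, hz⟩ := hmem
  have hz2 : 2 * z = Zsqrtd.sqrtd := zsqrtdToComplex_injective <| by
    rw [map_mul, map_ofNat, hz, ← hr]
    ring
  have him : 2 * z.im = 1 := by simpa using congrArg Zsqrtd.im hz2
  omega

end Embedding

section AmbiguousIdeal

/-- The ideal `(q, s + √d)` of `ℤ[√d]`. When `q` divides `2s` and `s² - d` it is stable under
conjugation, whence the name. -/
def ambiguousIdeal (d q s : ℤ) : Ideal (ℤ√d) :=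
  Ideal.span {(q : ℤ√d), ⟨s, 1⟩}

theorem ambiguousIdeal_mul_self {d q s c : ℤ} (hs : q ∣ 2 * s) (hc : s ^ 2 - d = q * c)
    (hqc : IsCoprime q c) :
    ambiguousIdeal d q s * ambiguousIdeal d q s = Ideal.span {(q : ℤ√d)} := by
  obtain ⟨e, he⟩ := hs
  have hsq : (⟨s, 1⟩ * ⟨s, 1⟩ : ℤ√d) = q * (e * ⟨s, 1⟩ - c) := by
    ext <;> simp
    · linear_combination -hc + s * he
    · linear_combination he
  rw [ambiguousIdeal, Ideal.span_pair_mul_span_pair]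
  apply le_antisymm
  · simp only [Ideal.span_le, Set.insert_subset_iff, Set.singleton_subset_iff, SetLike.mem_coe,
      Ideal.mem_span_singleton]
    exact ⟨dvd_mul_right _ _, dvd_mul_right _ _, dvd_mul_left _ _, hsq ▸ dvd_mul_right _ _⟩
  · obtain ⟨u, v, huv⟩ := hqc
    have huv' : (u * q + v * c : ℤ√d) = 1 := by exact_mod_cast congrArg (Int.cast : ℤ → ℤ√d) huv
    have hq : (q : ℤ√d) = u * (q * q) + v * e * (q * ⟨s, 1⟩) - v * (⟨s, 1⟩ * ⟨s, 1⟩) := by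
      rw [hsq]
      linear_combination -(q : ℤ√d) * huv'
    rw [Ideal.span_singleton_le_iff_mem]
    refine Set.mem_of_eq_of_mem hq (sub_mem (add_mem ?_ ?_) ?_) <;>
      exact Ideal.mul_mem_left _ _ (Ideal.subset_span (by simp))

theorem exists_ambiguousIdeal_mul_self_eq_span {m : ℤ} (hm : 4 ≤ m) :
    ∃ q s : ℤ, 1 < q ∧ q < 2 * m - 2 ∧
      ambiguousIdeal (m ^ 2 - 1) q s * ambiguousIdeal (m ^ 2 - 1) q s =
        Ideal.span {(q : ℤ√(m ^ 2 - 1))} := by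
  have hodd {a b : ℤ} (ha : Odd a) (hab : IsCoprime a b) : IsCoprime a (-(2 ^ 2 * b)) :=
    ((Int.isCoprime_two_right.2 ha).pow_right.mul_right hab).neg_right
  obtain ⟨k, rfl | rfl⟩ := Int.even_or_odd' m
  · exact ⟨2, 1, by omega, by omega, ambiguousIdeal_mul_self (c := 1 - 2 * k ^ 2) (by simp)
      (by ring) ⟨k ^ 2, 1, by ring⟩⟩
  obtain hk | hk := Int.even_or_odd k
  · exact ⟨k + 1, 0, by omega, by omega, ambiguousIdeal_mul_self (by simp) (by ring)
      (hodd hk.add_one (b := k) ⟨1, -1, by ring⟩)⟩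
  · exact ⟨k, 0, by omega, by omega, ambiguousIdeal_mul_self (by simp) (by ring)
      (hodd hk (b := k + 1) ⟨-1, 1, by ring⟩)⟩

end AmbiguousIdeal

section SmallNorm

variable {m : ℤ}

theorem abs_re_mem_Ioo_of_abs_norm_lt {z : ℤ√(m ^ 2 - 1)} (hz : |z.norm| < 2 * m - 2)
    (him : z.im ≠ 0) : |z.re| ∈ Set.Ioo ((m - 1) * |z.im|) ((m + 1) * |z.im|) := by
  have hnorm : z.norm = |z.re| ^ 2 - (m ^ 2 - 1) * |z.im| ^ 2 := by
    rw [Zsqrtd.norm_def, sq_abs, sq_abs]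
    ring
  obtain ⟨hlow, hupp⟩ := abs_lt.1 (hnorm ▸ hz)
  have hm : 1 < m := by linarith [abs_nonneg z.norm]
  have him2 : 1 ≤ |z.im| ^ 2 := one_le_pow₀ (Int.one_le_abs him)
  constructor <;> exact lt_of_pow_lt_pow_left₀ 2 (by positivity) (by nlinarith)

theorem isUnit_mk_of_abs_eq_one {e : ℤ} (he : |e| = 1) : IsUnit (⟨m, e⟩ : ℤ√(m ^ 2 - 1)) := by
  rw [← Zsqrtd.norm_eq_one_iff, Zsqrtd.norm_def]
  have he2 : e ^ 2 = 1 := by rw [← sq_abs, he, one_pow]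
  simp only
  rw [show m * m - (m ^ 2 - 1) * e * e = 1 by linear_combination (1 - m ^ 2) * he2]
  rfl

theorem exists_associated_abs_im_lt {z : ℤ√(m ^ 2 - 1)} (hz : |z.norm| < 2 * m - 2)
    (him : z.im ≠ 0) : ∃ w, Associated z w ∧ |w.im| < |z.im| := by
  obtain ⟨hlow, hupp⟩ := abs_re_mem_Ioo_of_abs_norm_lt hz him
  obtain ⟨e, he, hlt⟩ : ∃ e : ℤ, |e| = 1 ∧ |z.re * e + z.im * m| < |z.im| := by
    obtain ⟨hx, -⟩ | ⟨hx, -⟩ := abs_cases z.re <;> obtain ⟨hy, -⟩ | ⟨hy, -⟩ := abs_cases z.im <;>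
      rw [hx, hy] at hlow hupp <;> rw [hy]
    · exact ⟨-1, rfl, abs_lt.2 ⟨by linarith, by linarith⟩⟩
    · exact ⟨1, rfl, abs_lt.2 ⟨by linarith, by linarith⟩⟩
    · exact ⟨1, rfl, abs_lt.2 ⟨by linarith, by linarith⟩⟩
    · exact ⟨-1, rfl, abs_lt.2 ⟨by linarith, by linarith⟩⟩
  exact ⟨z * ⟨m, e⟩, (associated_mul_unit_left z _ (isUnit_mk_of_abs_eq_one he)).symm,
    by simpa using hlt⟩

theorem abs_norm_eq_of_associated {d : ℤ} {z w : ℤ√d} (h : Associated z w) :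
    |z.norm| = |w.norm| :=
  abs_eq_abs.2 (Int.associated_iff.1 (h.map Zsqrtd.normMonoidHom))

theorem exists_associated_intCast_of_abs_norm_lt (z : ℤ√(m ^ 2 - 1)) (hz : |z.norm| < 2 * m - 2) :
    ∃ n : ℤ, Associated z n := by
  induction hk : z.im.natAbs using Nat.strong_induction_on generalizing z with
  | _ k ih =>
    by_cases him : z.im = 0
    · exact ⟨z.re, .of_eq (by ext <;> simp [him])⟩
    obtain ⟨w, hzw, hw⟩ := exists_associated_abs_im_lt hz him
    have hlt : w.im.natAbs < k := by
      zify [← hk]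
      exact hw
    obtain ⟨n, hn⟩ := ih _ hlt w (abs_norm_eq_of_associated hzw ▸ hz) rfl
    exact ⟨n, hzw.trans hn⟩

end SmallNorm

theorem abs_norm_eq_of_associated_mul_self {d : ℤ} {a : ℤ√d} {q : ℤ} (h : Associated (a * a) q) :
    |a.norm| = |q| := by
  have h' := abs_norm_eq_of_associated h
  rw [Zsqrtd.norm_mul, Zsqrtd.norm_intCast, abs_mul_self, abs_mul_self] at h'
  exact abs_eq_abs.2 (mul_self_eq_mul_self_iff.1 h')

theorem not_isSquare_sq_sub_one {m : ℤ} (hm : 1 < m) : ¬ IsSquare (m ^ 2 - 1) := by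
  rintro ⟨n, hn⟩
  rw [← abs_mul_abs_self] at hn
  have := abs_nonneg n
  have hnm : |n| < m := by nlinarith
  nlinarith

theorem not_isPrincipal_ambiguousIdeal {m q s : ℤ} (hq : 1 < q) (hqm : q < 2 * m - 2)
    (h : ambiguousIdeal (m ^ 2 - 1) q s * ambiguousIdeal (m ^ 2 - 1) q s =
      Ideal.span {(q : ℤ√(m ^ 2 - 1))}) : ¬ (ambiguousIdeal (m ^ 2 - 1) q s).IsPrincipal := by
  rintro ⟨a, ha⟩
  have : Fact (¬ IsSquare (m ^ 2 - 1)) := ⟨not_isSquare_sq_sub_one (by omega)⟩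
  have hnorm : |a.norm| = q := by
    rw [← abs_of_pos (zero_lt_one.trans hq)]
    refine abs_norm_eq_of_associated_mul_self (Ideal.span_singleton_eq_span_singleton.1 ?_)
    rw [← h, ha, ← Ideal.span_singleton_mul_span_singleton]
  obtain ⟨n, hn⟩ := exists_associated_intCast_of_abs_norm_lt a (hnorm ▸ hqm)
  have hn1 : n ∣ 1 := by
    have hmem : (⟨s, 1⟩ : ℤ√(m ^ 2 - 1)) ∈ ambiguousIdeal (m ^ 2 - 1) q s :=
      Ideal.subset_span (by simp)
    rw [ha, Ideal.submodule_span_eq, Ideal.mem_span_singleton] at hmem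
    exact ((Zsqrtd.intCast_dvd _ _).1 (hn.symm.dvd.trans hmem)).2
  have hq1 : q = 1 := by
    rw [← hnorm, abs_norm_eq_of_associated hn, Zsqrtd.norm_intCast,
      Int.isUnit_mul_self (isUnit_of_dvd_one hn1), abs_one]
  omega

theorem even_classNumber_four_mul_sq_sub_one {m : ℤ} (hm : 4 ≤ m) :
    Even (classNumber (4 * (m ^ 2 - 1))) := by
  have : Fact (¬ IsSquare (m ^ 2 - 1)) := ⟨not_isSquare_sq_sub_one (by omega)⟩
  obtain ⟨q, s, hq, hqm, hI⟩ := exists_ambiguousIdeal_mul_self_eq_span hm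
  rw [classNumber_four_mul]
  exact even_card_classGroup_of_mul_self_eq_span (by exact_mod_cast (by omega : q ≠ 0)) hI
    (not_isPrincipal_ambiguousIdeal hq hqm hI)

section DiscriminantThirtyTwo

theorem norm_sub_mul_div_norm {d : ℤ} (g t : ℤ√d) {b : ℤ√d} (hb : b.norm ≠ 0) :
    ((g - t * b).norm / b.norm : ℚ) =
      ((g * star b).re / b.norm - t.re) ^ 2 - d * ((g * star b).im / b.norm - t.im) ^ 2 := by
  have hb' : (b.norm : ℚ) ≠ 0 := by exact_mod_cast hb
  have hnorm : ((g - t * b).norm * b.norm : ℚ) =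
      ((g * star b).re - t.re * b.norm) ^ 2 - d * ((g * star b).im - t.im * b.norm) ^ 2 := by
    norm_cast
    simp only [Zsqrtd.norm_def, Zsqrtd.re_sub, Zsqrtd.im_sub, Zsqrtd.re_mul, Zsqrtd.im_mul,
      Zsqrtd.re_star, Zsqrtd.im_star]
    ring
  field_simp
  linear_combination hnorm

theorem exists_int_abs_sub_sq_sub_lt_one {p y : ℚ} (hp : |p| ≤ 1 / 2) (hy : |y| ≤ 1 / 2)
    (hpy : ¬ (p = 0 ∧ |y| = 1 / 2)) : ∃ a : ℤ, |(p - a) ^ 2 - 8 * y ^ 2| < 1 := by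
  have hp0 := abs_nonneg p
  have hy0 := abs_nonneg y
  obtain hlt | hge := lt_or_ge (8 * y ^ 2) (1 + p ^ 2)
  · refine ⟨0, ?_⟩
    rw [Int.cast_zero, sub_zero, abs_lt]
    constructor <;> nlinarith [sq_abs p]
  obtain ⟨a, ha⟩ : ∃ a : ℤ, (p - a) ^ 2 = (|p| + 1) ^ 2 := by
    obtain ⟨h, -⟩ | ⟨h, -⟩ := abs_cases p <;> rw [h]
    · exact ⟨-1, by push_cast; ring⟩
    · exact ⟨1, by push_cast; ring⟩
  have hlower : 8 * y ^ 2 < 1 + (|p| + 1) ^ 2 := by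
    obtain hp' | hp' := hp0.eq_or_lt
    · have hy' : |y| < 1 / 2 := hy.lt_of_ne fun h ↦ hpy ⟨abs_eq_zero.1 hp'.symm, h⟩
      nlinarith [sq_abs y]
    · nlinarith [sq_abs y]
  have hupper : (|p| + 1) ^ 2 < 1 + 8 * y ^ 2 := by
    -- Equality would force `|p| = 1 / 2` and `8 y² = 5 / 4`, which has no rational solution.
    have h10 : ¬ IsSquare (10 : ℚ) := by norm_num
    have hne : 10 ≠ 8 * y * (8 * y) := fun h ↦ h10 ⟨8 * y, h⟩
    obtain hp' | hp' := hp.eq_or_lt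
    · rw [← sq_abs p, hp'] at hge
      rw [hp']
      refine lt_of_le_of_ne (by linarith) fun h ↦ hne (by linarith)
    · linarith [sq_abs p]
  exact ⟨a, by rw [ha]; exact abs_lt.2 ⟨by linarith, by linarith⟩⟩

instance fact_not_isSquare_eight : Fact (¬ IsSquare (8 : ℤ)) := ⟨by norm_num⟩

theorem two_mul_sub_mul_eq_sqrtd_mul {d : ℤ} [Fact (¬ IsSquare d)] {g b t : ℤ√d} (hb : b ≠ 0)
    (hre : (g * star b).re = t.re * b.norm) (him : 2 * (g * star b).im = (2 * t.im + 1) * b.norm) :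
    2 * (g - t * b) = Zsqrtd.sqrtd * b := by
  have hquot : 2 * (g * star b) = (2 * t + Zsqrtd.sqrtd) * (b.norm : ℤ√d) := by
    ext
    · simpa [mul_assoc] using hre
    · simpa using him
  refine mul_right_cancel₀ (star_ne_zero.2 hb) ?_
  rw [Zsqrtd.norm_eq_mul_conj] at hquot
  linear_combination hquot

theorem exists_abs_norm_sub_mul_lt_or (g : ℤ√8) {b : ℤ√8} (hb : b ≠ 0) :
    ∃ t, |(g - t * b).norm| < |b.norm| ∨ 2 * (g - t * b) = Zsqrtd.sqrtd * b := by
  have hN : b.norm ≠ 0 := fun h ↦ hb <|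
    (Zsqrtd.norm_eq_zero (fun n hn ↦ fact_not_isSquare_eight.out ⟨n, hn⟩) b).1 h
  have hN' : (b.norm : ℚ) ≠ 0 := by exact_mod_cast hN
  set p : ℚ := (g * star b).re / b.norm with hp
  set y : ℚ := (g * star b).im / b.norm with hy
  set c : ℤ := ⌈y - 1 / 2⌉
  have hc_lt : c < y - 1 / 2 + 1 := Int.ceil_lt_add_one _
  have hc_ge : y - 1 / 2 ≤ c := Int.le_ceil _
  by_cases hexc : p - round p = 0 ∧ |y - c| = 1 / 2
  · have hre : p = round p := sub_eq_zero.1 hexc.1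
    have him : y - c = 1 / 2 :=
      (eq_or_eq_neg_of_abs_eq hexc.2).resolve_right (by linarith)
    refine ⟨⟨round p, c⟩, .inr (two_mul_sub_mul_eq_sqrtd_mul hb ?_ ?_)⟩
    · rw [hp, div_eq_iff hN', ← hp] at hre
      exact_mod_cast hre
    · rw [hy, sub_eq_iff_eq_add, div_eq_iff hN'] at him
      have him' : (2 * (g * star b).im : ℚ) = (2 * c + 1) * b.norm := by linear_combination 2 * him
      exact_mod_cast him'
  · obtain ⟨a, ha⟩ := exists_int_abs_sub_sq_sub_lt_one (abs_sub_round p)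
      (abs_le.2 ⟨by linarith, by linarith⟩) hexc
    refine ⟨⟨round p + a, c⟩, .inl ?_⟩
    have hdiv := norm_sub_mul_div_norm g ⟨round p + a, c⟩ hN
    push_cast at hdiv
    rw [← sub_sub] at hdiv
    rw [← hdiv, abs_div, div_lt_one (abs_pos.2 hN')] at ha
    exact_mod_cast ha

theorem exists_mem_forall_dvd_or (I : Ideal (ℤ√8)) :
    ∃ b ∈ I, ∀ g ∈ I, b ∣ g ∨ ∃ t, 2 * (g - t * b) = Zsqrtd.sqrtd * b := by
  obtain rfl | hI := eq_or_ne I ⊥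
  · exact ⟨0, zero_mem _, fun g hg ↦ .inl (zero_dvd_iff.2 hg)⟩
  obtain ⟨b, ⟨hb, hb0⟩, hmin⟩ := exists_minimalFor_of_wellFoundedLT
    (fun z ↦ z ∈ I ∧ z ≠ 0) (fun z ↦ z.norm.natAbs) (Submodule.exists_mem_ne_zero_of_ne_bot hI)
  refine ⟨b, hb, fun g hg ↦ ?_⟩
  obtain ⟨t, hlt | ht⟩ := exists_abs_norm_sub_mul_lt_or g hb0
  · refine .inl ⟨t, ?_⟩
    by_contra hne
    have hmem : g - t * b ∈ I := sub_mem hg (I.mul_mem_left _ hb)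
    have hlt' : (g - t * b).norm.natAbs < b.norm.natAbs := by zify; exact hlt
    exact hlt'.not_ge (hmin ⟨hmem, fun h ↦ hne (by rw [sub_eq_zero.1 h, mul_comm])⟩ hlt'.le)
  · exact .inr ⟨t, ht⟩

/-- Here `h / b = √d / 2` and `I = b ℤ[√d / 2]`, which is stable under multiplication by
`√d / 2`. -/
theorem mul_span_sqrtd_le_mul_span_two {d : ℤ} [Fact (¬ IsSquare d)] (h4 : 4 ∣ d)
    {I : Ideal (ℤ√d)} {b h : ℤ√d} (hb : b ∈ I) (hh : h ∈ I) (hhb : 2 * h = Zsqrtd.sqrtd * b)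
    (hI : ∀ g ∈ I, b ∣ g ∨ ∃ t, 2 * (g - t * b) = Zsqrtd.sqrtd * b) :
    I * Ideal.span {Zsqrtd.sqrtd} ≤ I * Ideal.span {2} := by
  obtain ⟨e, he⟩ := h4
  have hsq : (Zsqrtd.sqrtd * Zsqrtd.sqrtd : ℤ√d) = 4 * e := by
    rw [Zsqrtd.dmuld]
    exact_mod_cast congrArg (Int.cast : ℤ → ℤ√d) he
  have hsh : Zsqrtd.sqrtd * h = 2 * (e : ℤ√d) * b := by
    refine mul_left_cancel₀ (two_ne_zero (α := ℤ√d)) ?_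
    linear_combination Zsqrtd.sqrtd * hhb + b * hsq
  rw [Ideal.mul_le]
  intro g hg _ hs
  obtain ⟨r, rfl⟩ := Ideal.mem_span_singleton.1 hs
  suffices ∃ j ∈ I, g * Zsqrtd.sqrtd = j * 2 by
    obtain ⟨j, hj, hgj⟩ := this
    rw [← mul_assoc, hgj, mul_assoc]
    exact Ideal.mul_mem_mul hj (Ideal.mul_mem_right _ _ (Ideal.mem_span_singleton_self 2))
  obtain ⟨k, rfl⟩ | ⟨t, ht⟩ := hI g hg
  · exact ⟨k * h, I.mul_mem_left _ hh, by linear_combination -k * hhb⟩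
  · have hg' : g = t * b + h :=
      mul_left_cancel₀ (two_ne_zero (α := ℤ√d)) (by linear_combination ht - hhb)
    refine ⟨t * h + e * b, add_mem (I.mul_mem_left _ hh) (I.mul_mem_left _ hb), ?_⟩
    rw [hg']
    linear_combination -t * hhb + hsh

theorem isPrincipal_of_isUnit_coeIdeal_zsqrtd_eight {I : Ideal (ℤ√8)}
    (hI : IsUnit (I : FractionalIdeal (ℤ√8)⁰ (FractionRing (ℤ√8)))) : I.IsPrincipal := by
  obtain ⟨b, hb, hdvd⟩ := exists_mem_forall_dvd_or I
  by_contra hnp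
  obtain ⟨g, hg, hbg⟩ : ∃ g ∈ I, ¬ b ∣ g := by
    by_contra! h
    exact hnp ⟨b, le_antisymm (fun g hg ↦ Ideal.mem_span_singleton.2 (h g hg))
      ((Ideal.span_singleton_le_iff_mem _).2 hb)⟩
  obtain ⟨t, ht⟩ := (hdvd g hg).resolve_left hbg
  have hle : Ideal.span {(Zsqrtd.sqrtd : ℤ√8)} ≤ Ideal.span {((2 : ℤ) : ℤ√8)} :=
    le_of_mul_le_mul_left_of_isUnit hI <|
      mul_span_sqrtd_le_mul_span_two (by norm_num) hb (sub_mem hg (I.mul_mem_left t hb)) ht hdvd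
  rw [Ideal.span_singleton_le_span_singleton, Zsqrtd.intCast_dvd] at hle
  exact absurd hle.2 (by decide)

theorem classNumber_thirtyTwo : classNumber 32 = 1 := by
  have := subsingleton_classGroup_of_isPrincipal_of_isUnit fun I : Ideal (ℤ√8) ↦
    isPrincipal_of_isUnit_coeIdeal_zsqrtd_eight (I := I)
  rw [show (32 : ℤ) = 4 * 8 by norm_num, classNumber_four_mul, Nat.card_unique]

end DiscriminantThirtyTwo

theorem classNumber_sub_even_cases_general :
    (∀ n : ℤ, 0 ≤ n → Even n → ¬ IsSquare (n ^ 2 - 4) → IsMaximalOrder (n ^ 2 - 4) →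
      Odd (classNumber (n ^ 2 - 4)) → n = 0 ∨ n = 4) ∧
    (∀ n : ℤ, Even n → 6 < n → Even (classNumber (n ^ 2 - 4))) ∧
    classNumber 32 = 1 := by
  have heven (n : ℤ) (hn : Even n) (h6 : 6 < n) : Even (classNumber (n ^ 2 - 4)) := by
    obtain ⟨m, rfl⟩ := even_iff_exists_two_mul.1 hn
    rw [show (2 * m) ^ 2 - 4 = 4 * (m ^ 2 - 1) by ring]
    exact even_classNumber_four_mul_sq_sub_one (by omega)
  refine ⟨fun n hn0 hn hsq hmax hodd ↦ ?_, heven, classNumber_thirtyTwo⟩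
  have hn6 : n ≤ 6 := not_lt.1 fun h6 ↦ Nat.not_even_iff_odd.2 hodd (heven n hn h6)
  have hn2 : n ≠ 2 := by
    rintro rfl
    exact hsq ⟨0, rfl⟩
  have hne6 : n ≠ 6 := by
    rintro rfl
    exact not_isMaximalOrder_four_mul (d := 8) (by norm_num) (by simpa using hmax)
  obtain ⟨m, rfl⟩ := even_iff_exists_two_mul.1 hn
  omega

/-- Let `Δ = n² - 4` for `n ≥ 0` with `Δ` nonsquare. (1) If `n` is even, `O_Δ` is maximal
and `h_Δ = 1`, then `n ∈ {0, 4}` (so `Δ ∈ {-4, 12}`). (2) If `n ≡ 2 (mod 4)` and `n > 6`,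
then `h_Δ` is even, regardless of maximality; while for `n = 6` (`Δ = 32`), `h_{32} = 1`. -/
theorem classNumber_sub_even_cases :
    (∀ n : ℤ, 0 ≤ n → Even n → ¬ IsSquare (n ^ 2 - 4) → IsMaximalOrder (n ^ 2 - 4) →
      classNumber (n ^ 2 - 4) = 1 → n = 0 ∨ n = 4) ∧
    (∀ n : ℤ, n % 4 = 2 → 6 < n → Even (classNumber (n ^ 2 - 4))) ∧
    classNumber 32 = 1 := by
  obtain ⟨h₁, h₂, h₃⟩ := classNumber_sub_even_cases_general
  exact ⟨fun n hn he hs hm h1 ↦ h₁ n hn he hs hm (h1 ▸ odd_one),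
    fun n hn ↦ h₂ n (Int.even_iff.2 (by omega)), h₃⟩
end
end
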